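/- Let p, q be positive natural numbers and let Σ be a p×q real matrix satisfying Σᵢⱼ = 0 whenever i ≠ j (as natural number indices) and Σᵢᵢ ≥ 0 for all i. Let I_{p,q} denote the p×q matrix whose (i,j) entry is 1 if i = j (as natural number indices) and 0 otherwise. Then for every p×q real matrix P satisfying PᵀP = I_q (the q×q identity), ‖I_{p,q} − Σ‖_F ≤ ‖P − Σ‖_F. -/

import Mathlib

/-!
The inequality holds column by column. The columns of `P` are unit vectors, so `P i j ≤ 1`, and
since `S` is nonnegative and supported on the diagonal, where `I_{p,q}` equals `1`, we have
`S i j * P i j ≤ S i j * I i j` for every entry. Expanding squares,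
`(I i j - S i j)² ≤ (P i j - S i j)² + (I i j)² - (P i j)²`. Summed over a column, the correction
`∑ (I i j)² - ∑ (P i j)²` is nonpositive, since a column of `I_{p,q}` has at most one nonzero
entry. The case `p < q`, where no such `P` exists, needs no separate treatment.
-/

open Matrix

/-- The Frobenius norm of a rectangular real matrix. -/
noncomputable def frobNorm {p q : ℕ} (A : Matrix (Fin p) (Fin q) ℝ) : ℝ :=
  Real.sqrt (∑ i, ∑ j, (A i j) ^ 2)

/-- The `p × q` matrix `I_{p,q}` with ones on the (natural-index) diagonal and zeros elsewhere. -/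
def Ipq (p q : ℕ) : Matrix (Fin p) (Fin q) ℝ :=
  fun i j => if (i : ℕ) = (j : ℕ) then 1 else 0

lemma sum_sq_col_Ipq_le_one {p q : ℕ} (j : Fin q) : ∑ i, (Ipq p q i j) ^ 2 ≤ 1 := by
  by_cases hj : (j : ℕ) < p
  · rw [Finset.sum_eq_single (⟨j, hj⟩ : Fin p)]
    · simp [Ipq]
    · intro i _ hi
      have : (i : ℕ) ≠ j := fun h => hi (Fin.ext h)
      simp [Ipq, this]
    · simp
  · rw [Finset.sum_eq_zero]
    · exact zero_le_one
    · intro i _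
      have : (i : ℕ) ≠ j := by have := i.isLt; omega
      simp [Ipq, this]

/-- Diagonal reduction step: if `S` is a `p × q` matrix that vanishes off the
(natural-index) diagonal and has nonnegative diagonal entries, then `I_{p,q}` minimizes
the Frobenius distance to `S` over all `P` with `Pᵀ P = 1`. -/
theorem soc_projection_diagonal (p q : ℕ) (hp : 0 < p) (hq : 0 < q)
    (S : Matrix (Fin p) (Fin q) ℝ)
    (hSdiag : ∀ (i : Fin p) (j : Fin q), (i : ℕ) ≠ (j : ℕ) → S i j = 0)
    (hSpos : ∀ (i : Fin p) (j : Fin q), (i : ℕ) = (j : ℕ) → 0 ≤ S i j) :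
    ∀ P : Matrix (Fin p) (Fin q) ℝ, Pᵀ * P = 1 →
      frobNorm (Ipq p q - S) ≤ frobNorm (P - S) := by
  intro P hP
  have hcol (j : Fin q) : ∑ i, (P i j) ^ 2 = 1 := by
    have h := congrFun (congrFun hP j) j
    simpa [Matrix.mul_apply, sq] using h
  have hle (i : Fin p) (j : Fin q) : P i j ≤ 1 := by
    have h := Finset.single_le_sum (f := fun i => (P i j) ^ 2)
      (fun i _ => sq_nonneg _) (Finset.mem_univ i)
    rw [hcol j] at h
    nlinarith
  have hterm (i : Fin p) (j : Fin q) :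
      ((Ipq p q - S) i j) ^ 2 ≤ ((P - S) i j) ^ 2 + ((Ipq p q i j) ^ 2 - (P i j) ^ 2) := by
    simp only [Matrix.sub_apply]
    by_cases h : (i : ℕ) = j
    · have hI : Ipq p q i j = 1 := if_pos h
      rw [hI]
      nlinarith [mul_nonneg (hSpos i j h) (sub_nonneg.2 (hle i j))]
    · rw [hSdiag i j h]
      simp
  unfold frobNorm
  apply Real.sqrt_le_sqrt
  rw [Finset.sum_comm, Finset.sum_comm (f := fun i j => ((P - S) i j) ^ 2)]
  refine Finset.sum_le_sum fun j _ => ?_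
  have h := Finset.sum_le_sum fun i (_ : i ∈ Finset.univ) => hterm i j
  rw [Finset.sum_add_distrib, Finset.sum_sub_distrib, hcol j] at h
  linarith [sum_sq_col_Ipq_le_one (p := p) j]
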